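/- Fix an integer d ≥ 2. There exists a constant C > 0 such that for every prime p, every nontrivial irreducible unitary representation π of SL₂(ℤ/pℤ) of dimension d(π), and every integer m with 1 ≤ m ≤ (1/4)·log_{2d}(p), the proportion of tuples S = (g₁, …, g_d) ∈ (SL₂(ℤ/pℤ))^d (with respect to the uniform measure) satisfying |(1/d(π))·tr(A_{π,S}^m) − N(d, m)| ≥ p^{−1/10} is at most C·p^{−1/4}. -/

import Mathlib

open MeasureTheory

noncomputable section

abbrev SL (n p : ℕ) := Matrix.SpecialLinearGroup (Fin n) (ZMod p)

/-- Density of the Kesten–McKay law with parameter `2d`. -/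
noncomputable def kmDensity (d : ℕ) (x : ℝ) : ℝ :=
  if x ^ 2 ≤ 4 * (2 * (d : ℝ) - 1) then
    2 * d * Real.sqrt (4 * (2 * (d : ℝ) - 1) - x ^ 2) /
      (2 * Real.pi * ((2 * (d : ℝ)) ^ 2 - x ^ 2))
  else 0

/-- The Kesten–McKay law with parameter `2d`, as a measure on `ℝ`. -/
noncomputable def kestenMcKay (d : ℕ) : Measure ℝ :=
  MeasureTheory.volume.withDensity fun x => ENNReal.ofReal (kmDensity d x)

/-- Discrepancy between two measures on ℝ. -/
noncomputable def discrepancy (ν μ : Measure ℝ) : ℝ :=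
  sSup {r : ℝ | ∃ a b : ℝ, a ≤ b ∧
    r = |(ν (Set.Icc a b)).toReal - (μ (Set.Icc a b)).toReal|}

/-- The element of the free group on `d` generators given by a word of length `m`. -/
def wordProd {d m : ℕ} (w : Fin m → Fin d × Bool) : FreeGroup (Fin d) :=
  (List.ofFn fun j => if (w j).2 then FreeGroup.of (w j).1 else (FreeGroup.of (w j).1)⁻¹).prod

/-- Evaluation of a word of length `m` in `d` letters at a tuple `S`. -/
def wordEval {G : Type*} [Group G] {d m : ℕ} (S : Fin d → G) (w : Fin m → Fin d × Bool) : G :=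
  (List.ofFn fun j => if (w j).2 then S (w j).1 else (S (w j).1)⁻¹).prod

/-- `N(d,m)`: the number of trivial words of length `m` in `d` letters. -/
noncomputable def Ntriv (d m : ℕ) : ℕ :=
  Nat.card {w : Fin m → Fin d × Bool // wordProd w = 1}

/-- `A_{π,S} = Σᵢ (π gᵢ + (π gᵢ)⁻¹)`. -/
noncomputable def Amat {G : Type*} [Group G] {n d : ℕ}
    (π : G →* Matrix.unitaryGroup (Fin n) ℂ) (S : Fin d → G) : Matrix (Fin n) (Fin n) ℂ :=
  ∑ i, ((π (S i) : Matrix (Fin n) (Fin n) ℂ) + ((π (S i))⁻¹ : Matrix (Fin n) (Fin n) ℂ))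

/-- Spectral probability measure of a Hermitian matrix. -/
noncomputable def specMeasure {n : ℕ} (A : Matrix (Fin n) (Fin n) ℂ) : Measure ℝ := by
  classical
  exact if hA : A.IsHermitian then
    (n : ENNReal)⁻¹ • ∑ j : Fin n, Measure.dirac (hA.eigenvalues j) else 0

/-- A unitary representation is irreducible if the only invariant subspaces are `⊥` and `⊤`. -/
def IsIrreducibleRep {G : Type*} [Group G] {n : ℕ}
    (π : G →* Matrix.unitaryGroup (Fin n) ℂ) : Prop :=
  ∀ W : Submodule ℂ (Fin n → ℂ),
    (∀ g : G, ∀ v ∈ W, (π g : Matrix (Fin n) (Fin n) ℂ).mulVec v ∈ W) → W = ⊥ ∨ W = ⊤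

/-- Number of eigenvalues of a Hermitian matrix with `|λ| > t`, with multiplicity. -/
noncomputable def excCount {n : ℕ} (A : Matrix (Fin n) (Fin n) ℂ) (t : ℝ) : ℕ := by
  classical
  exact if hA : A.IsHermitian then
    (Finset.univ.filter fun j : Fin n => t < |hA.eigenvalues j|).card else 0

end

section RepPart

variable {G : Type*} [Group G] {n : ℕ}

lemma aux_schur (π : G →* Matrix.unitaryGroup (Fin n) ℂ) (hirr : IsIrreducibleRep π)
    (hn : 0 < n) (M : Matrix (Fin n) (Fin n) ℂ)
    (hM : ∀ g, (π g : Matrix (Fin n) (Fin n) ℂ) * M = M * (π g : Matrix (Fin n) (Fin n) ℂ)) :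
    ∃ c : ℂ, M = c • (1 : Matrix (Fin n) (Fin n) ℂ) := by
  have : Nonempty (Fin n) := ⟨⟨0, hn⟩⟩
  obtain ⟨c, hc⟩ := Module.End.exists_eigenvalue (Matrix.toLin' M)
  refine ⟨c, ?_⟩
  have key : Module.End.eigenspace (Matrix.toLin' M) c = ⊤ := by
    refine (hirr (Module.End.eigenspace (Matrix.toLin' M) c) ?_).resolve_left hc
    intro g v hv
    rw [Module.End.mem_eigenspace_iff, Matrix.toLin'_apply] at hv ⊢
    rw [Matrix.mulVec_mulVec, ← hM, ← Matrix.mulVec_mulVec, hv, Matrix.mulVec_smul]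
  apply Matrix.toLin'.injective
  ext1 v
  have : Matrix.toLin' M (Pi.single v 1) = c • (Pi.single v 1) := by
    rw [← Module.End.mem_eigenspace_iff, key]; trivial
  ext j
  simpa using congrFun this j

lemma aux_orth [Fintype G] (π : G →* Matrix.unitaryGroup (Fin n) ℂ) (hirr : IsIrreducibleRep π)
    (hn : 0 < n) (i j : Fin n) :
    ∑ h : G, (π h : Matrix (Fin n) (Fin n) ℂ) i i * star ((π h : Matrix (Fin n) (Fin n) ℂ) j j)
      = if i = j then (Fintype.card G : ℂ) / n else 0 := by
  set M : Matrix (Fin n) (Fin n) ℂ := ∑ h : G, (π h : Matrix (Fin n) (Fin n) ℂ) *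
    Matrix.single i j 1 * star (π h : Matrix (Fin n) (Fin n) ℂ) with hMdef
  have hcomm : ∀ g, (π g : Matrix (Fin n) (Fin n) ℂ) * M
      = M * (π g : Matrix (Fin n) (Fin n) ℂ) := by
    intro g
    have h1 : (π g : Matrix (Fin n) (Fin n) ℂ) * M * star (π g : Matrix (Fin n) (Fin n) ℂ) = M := by
      rw [hMdef, Finset.mul_sum, Finset.sum_mul]
      apply Fintype.sum_equiv (Equiv.mulLeft g)
      intro h
      simp [mul_assoc]
    have h2 : star (π g : Matrix (Fin n) (Fin n) ℂ) * (π g : Matrix (Fin n) (Fin n) ℂ) = 1 :=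
      Matrix.UnitaryGroup.star_mul_self (π g)
    calc _ = (π g : Matrix (Fin n) (Fin n) ℂ) * M *
          (star (π g : Matrix (Fin n) (Fin n) ℂ) * (π g : Matrix (Fin n) (Fin n) ℂ)) := by
            rw [h2, mul_one]
      _ = _ := by rw [← mul_assoc, h1]
  obtain ⟨c, hc⟩ := aux_schur π hirr hn M hcomm
  have htr : M.trace = (Fintype.card G : ℂ) * (if i = j then 1 else 0) := by
    rw [hMdef, Matrix.trace_sum]
    have : ∀ h : G, ((π h : Matrix (Fin n) (Fin n) ℂ) *
      Matrix.single i j 1 * star (π h : Matrix (Fin n) (Fin n) ℂ)).trace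
        = if i = j then 1 else 0 := by
      intro h
      rw [Matrix.trace_mul_comm, ← mul_assoc, Matrix.UnitaryGroup.star_mul_self, one_mul]
      split_ifs with hij
      · subst hij; simp
      · simp [Matrix.trace_single_eq_of_ne, hij]
    simp [this]
  have hn' : (n : ℂ) ≠ 0 := by exact_mod_cast hn.ne'
  have hc2 : c * n = (Fintype.card G : ℂ) * (if i = j then 1 else 0) := by
    rw [← htr, hc]; simp
  have hent : M i j = ∑ h : G, (π h : Matrix (Fin n) (Fin n) ℂ) i i *
      star ((π h : Matrix (Fin n) (Fin n) ℂ) j j) := by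
    rw [hMdef, Matrix.sum_apply]
    refine Finset.sum_congr rfl fun h _ => ?_
    simp [Matrix.mul_apply, Matrix.single_apply, Matrix.star_apply, ite_and]
  rw [← hent, hc]
  split_ifs at hc2 ⊢ with hij
  · subst hij
    simp only [Matrix.smul_apply, Matrix.one_apply_eq, smul_eq_mul, mul_one] at hc2 ⊢
    field_simp
    exact hc2
  · simp [hij]

lemma aux_char_norm [Fintype G] (π : G →* Matrix.unitaryGroup (Fin n) ℂ)
    (hirr : IsIrreducibleRep π) (hn : 0 < n) :
    ∑ h : G, ‖(π h : Matrix (Fin n) (Fin n) ℂ).trace‖ ^ 2 = Fintype.card G := by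
  have hn' : (n : ℂ) ≠ 0 := by exact_mod_cast hn.ne'
  have : ((∑ h : G, ‖(π h : Matrix (Fin n) (Fin n) ℂ).trace‖ ^ 2 : ℝ) : ℂ)
      = (Fintype.card G : ℂ) := by
    push_cast
    have h1 : ∀ h : G, ((‖(π h : Matrix (Fin n) (Fin n) ℂ).trace‖ : ℂ)) ^ 2
        = ∑ i, ∑ j, (π h : Matrix (Fin n) (Fin n) ℂ) i i *
          star ((π h : Matrix (Fin n) (Fin n) ℂ) j j) := by
      intro h
      rw [← Complex.mul_conj', Matrix.trace, map_sum, Finset.sum_mul_sum]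
      rfl
    simp_rw [h1]
    rw [Finset.sum_comm]
    simp_rw [Finset.sum_comm (s := (Finset.univ : Finset G)), aux_orth π hirr hn]
    simp
    field_simp
  exact_mod_cast this

open Classical in
lemma aux_char_le [Fintype G] (π : G →* Matrix.unitaryGroup (Fin n) ℂ)
    (hirr : IsIrreducibleRep π) (hn : 0 < n) (g : G) (K : ℕ)
    (hK : (Finset.univ.filter fun h : G => h * g = g * h).card ≤ K) :
    ‖(π g : Matrix (Fin n) (Fin n) ℂ).trace‖ ^ 2 ≤ K := by
  set f : G → ℝ := fun x => ‖(π x : Matrix (Fin n) (Fin n) ℂ).trace‖ ^ 2 with hf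
  have hconj : ∀ h : G, f (h * g * h⁻¹) = f g := by
    intro h
    simp only [hf, map_mul]
    congr 2
    rw [Submonoid.coe_mul, Matrix.trace_mul_comm, ← Submonoid.coe_mul, ← mul_assoc, ← map_mul,
      inv_mul_cancel, map_one, one_mul]
  have h1 : (Fintype.card G : ℝ) * f g = ∑ h : G, f (h * g * h⁻¹) := by
    simp [hconj]
  have h2 : ∑ h : G, f (h * g * h⁻¹) = ∑ x : G, ∑ h : G with h * g * h⁻¹ = x, f (h * g * h⁻¹) :=
    (Finset.sum_fiberwise _ _ _).symm
  have h3 : ∀ x : G, ∑ h : G with h * g * h⁻¹ = x, f (h * g * h⁻¹) ≤ K * f x := by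
    intro x
    have e1 : ∑ h : G with h * g * h⁻¹ = x, f (h * g * h⁻¹)
        = ∑ h : G with h * g * h⁻¹ = x, f x :=
      Finset.sum_congr rfl fun h hh => by rw [(Finset.mem_filter.1 hh).2]
    rw [e1, Finset.sum_const, nsmul_eq_mul]
    apply mul_le_mul_of_nonneg_right _ (by positivity)
    norm_cast
    refine le_trans ?_ hK
    rcases (Finset.univ.filter fun h : G => h * g * h⁻¹ = x).eq_empty_or_nonempty with he | ⟨h0, hh0⟩
    · rw [he]; simp
    · apply Finset.card_le_card_of_injOn (fun h => h0⁻¹ * h)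
      · intro h hh
        simp only [Finset.coe_filter, Finset.mem_univ, true_and, Set.mem_ofPred_eq,
          Finset.mem_filter] at hh hh0 ⊢
        rw [mul_inv_eq_iff_eq_mul] at hh hh0
        rw [mul_assoc, hh, ← mul_assoc, ← mul_assoc]
        congr 1
        rw [inv_mul_eq_iff_eq_mul, ← mul_assoc, hh0, mul_assoc, mul_inv_cancel, mul_one]
      · intro a _ b _ hab
        exact mul_left_cancel hab
  have h4 : (Fintype.card G : ℝ) * f g ≤ Fintype.card G * K := by
    rw [h1, h2]
    refine (Finset.sum_le_sum fun x _ => h3 x).trans ?_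
    rw [← Finset.mul_sum, aux_char_norm π hirr hn, mul_comm]
  exact le_of_mul_le_mul_left h4 (by exact_mod_cast Fintype.card_pos)

end RepPart

section SLPart

variable {p : ℕ} [Fact p.Prime]

def upperM (t : ZMod p) : SL 2 p := ⟨!![1, t; 0, 1], by simp [Matrix.det_fin_two]⟩

def lowerM (t : ZMod p) : SL 2 p := ⟨!![1, 0; t, 1], by simp [Matrix.det_fin_two]⟩

def weylM : SL 2 p := ⟨!![0, -1; 1, 0], by simp [Matrix.det_fin_two]⟩

def diagM (a : ZMod p) (ha : a ≠ 0) : SL 2 p :=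
  ⟨!![a, 0; 0, a⁻¹], by simp [Matrix.det_fin_two, ha]⟩

lemma upperM_coe (t : ZMod p) : (upperM t : Matrix (Fin 2) (Fin 2) (ZMod p)) = !![1, t; 0, 1] := rfl

lemma lowerM_coe (t : ZMod p) : (lowerM t : Matrix (Fin 2) (Fin 2) (ZMod p)) = !![1, 0; t, 1] := rfl

lemma weylM_coe : ((weylM : SL 2 p) : Matrix (Fin 2) (Fin 2) (ZMod p)) = !![0, -1; 1, 0] := rfl

lemma diagM_coe (a : ZMod p) (ha : a ≠ 0) :
    (diagM a ha : Matrix (Fin 2) (Fin 2) (ZMod p)) = !![a, 0; 0, a⁻¹] := rfl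

lemma upperM_mul (s t : ZMod p) : upperM s * upperM t = upperM (s + t) := by
  ext i j
  fin_cases i <;> fin_cases j <;> simp [upperM_coe, Matrix.mul_apply, Fin.sum_univ_two, add_comm]

lemma lowerM_mul (s t : ZMod p) : lowerM s * lowerM t = lowerM (s + t) := by
  ext i j
  fin_cases i <;> fin_cases j <;> simp [lowerM_coe, Matrix.mul_apply, Fin.sum_univ_two]

lemma upperM_zero : (upperM (0 : ZMod p)) = 1 := by
  ext i j
  fin_cases i <;> fin_cases j <;> simp [upperM_coe]

lemma lowerM_zero : (lowerM (0 : ZMod p)) = 1 := by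
  ext i j
  fin_cases i <;> fin_cases j <;> simp [lowerM_coe]

lemma upperM_pow (k : ℕ) : (upperM (1 : ZMod p)) ^ k = upperM (k : ZMod p) := by
  induction k with
  | zero => simp [upperM_zero]
  | succ k ih => rw [pow_succ, ih, upperM_mul]; push_cast; rfl

lemma weyl_conj (t : ZMod p) : weylM * upperM t * weylM⁻¹ = lowerM (-t) := by
  rw [mul_inv_eq_iff_eq_mul]
  ext i j
  fin_cases i <;> fin_cases j <;>
    simp [lowerM_coe, upperM_coe, weylM_coe, Matrix.mul_apply, Fin.sum_univ_two]

lemma diag_conj (a : ZMod p) (ha : a ≠ 0) (t : ZMod p) :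
    diagM a ha * upperM t * (diagM a ha)⁻¹ = upperM (a ^ 2 * t) := by
  rw [mul_inv_eq_iff_eq_mul]
  ext i j
  fin_cases i <;> fin_cases j <;>
    simp [upperM_coe, diagM_coe, Matrix.mul_apply, Fin.sum_univ_two]
  field_simp

lemma aux_bruhat (g : SL 2 p) (hc : g 1 0 ≠ 0) :
    g = upperM ((g 0 0 - 1) / g 1 0) * lowerM (g 1 0) * upperM ((g 1 1 - 1) / g 1 0) := by
  have hdet := g.det_coe
  rw [Matrix.det_fin_two] at hdet
  ext i j
  fin_cases i <;> fin_cases j <;>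
    simp [upperM_coe, lowerM_coe, Matrix.mul_apply, Fin.sum_univ_two]
  · field_simp; ring
  · field_simp; linear_combination -hdet
  · field_simp; ring

lemma aux_gen (H : Subgroup (SL 2 p)) [H.Normal] (hu : upperM (1 : ZMod p) ∈ H) (g : SL 2 p) :
    g ∈ H := by
  have hU : ∀ t : ZMod p, upperM t ∈ H := by
    intro t
    obtain ⟨k, rfl⟩ := ZMod.natCast_zmod_surjective t
    rw [← upperM_pow]
    exact H.pow_mem hu k
  have hL : ∀ t : ZMod p, lowerM t ∈ H := by
    intro t
    rw [← neg_neg t, ← weyl_conj]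
    exact Subgroup.Normal.conj_mem inferInstance _ (hU _) _
  have hB : ∀ g : SL 2 p, g 1 0 ≠ 0 → g ∈ H := by
    intro g hg
    rw [aux_bruhat g hg]
    exact H.mul_mem (H.mul_mem (hU _) (hL _)) (hU _)
  by_cases hc : g 1 0 = 0
  · have h1 : g * lowerM 1 ∈ H := by
      apply hB
      have hdet := g.det_coe
      rw [Matrix.det_fin_two, hc] at hdet
      simp [lowerM_coe, Matrix.mul_apply, Fin.sum_univ_two, hc]
      rintro h
      simp [h] at hdet
    exact (Subgroup.mul_mem_cancel_right H (hL 1)).1 h1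
  · exact hB g hc

lemma aux_dim {n : ℕ} (π : SL 2 p →* Matrix.unitaryGroup (Fin n) ℂ)
    (hnt : ∃ g, π g ≠ 1) : (p - 1) / 2 ≤ n := by
  have hp : p.Prime := Fact.out
  have hu : π (upperM 1) ≠ 1 := by
    intro h
    obtain ⟨g, hg⟩ := hnt
    exact hg (aux_gen π.ker h g)
  set T : Matrix (Fin n) (Fin n) ℂ := (π (upperM 1) : Matrix (Fin n) (Fin n) ℂ) with hT
  have hTne : T ≠ 1 := fun h => hu (Subtype.ext h)
  have hTp : T ^ p = 1 := by
    rw [hT, ← SubmonoidClass.coe_pow, ← map_pow, upperM_pow, ZMod.natCast_self, upperM_zero, map_one]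
    rfl
  have hne : Nontrivial (Matrix (Fin n) (Fin n) ℂ) := ⟨T, 1, hTne⟩
  -- an eigenvalue different from one
  have hz : ∃ z ∈ spectrum ℂ T, z ≠ 1 := by
    by_contra! hcon
    set Q : Polynomial ℂ := ∑ k ∈ Finset.range p, Polynomial.X ^ k with hQ
    have hQT : Polynomial.aeval T Q * (T - 1) = 0 := by
      simp only [hQ, map_sum, map_pow, Polynomial.aeval_X]
      rw [geom_sum_mul, hTp, sub_self]
    have hunit : IsUnit (Polynomial.aeval T Q) := by
      rw [← spectrum.zero_notMem_iff ℂ, spectrum.map_polynomial_aeval_of_nonempty _ _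
        (spectrum.nonempty_of_isAlgClosed_of_finiteDimensional ℂ T)]
      rintro ⟨z, hz, hz0⟩
      rw [hcon z hz] at hz0
      simp [hQ, Polynomial.eval_finsetSum] at hz0
      exact hp.ne_zero hz0
    rw [hunit.mul_right_eq_zero, sub_eq_zero] at hQT
    exact hTne hQT
  obtain ⟨z, hz, hz1⟩ := hz
  have hzp : z ^ p = 1 := by
    have := spectrum.pow_mem_pow T p hz
    rw [hTp, spectrum.one_eq] at this
    exact this
  have hord : orderOf z = p := orderOf_eq_prime hzp hz1
  have hsq : ∀ k ∈ Finset.Icc 1 ((p - 1) / 2), z ^ (k ^ 2) ∈ T.charpoly.roots.toFinset := by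
    intro k hk
    rw [Finset.mem_Icc] at hk
    have hk0 : (k : ZMod p) ≠ 0 := by
      rw [Ne, ZMod.natCast_eq_zero_iff]
      intro h
      have := Nat.le_of_dvd (by omega) h
      omega
    rw [Multiset.mem_toFinset, Polynomial.mem_roots (Matrix.charpoly_monic T).ne_zero,
      ← Matrix.mem_spectrum_iff_isRoot_charpoly]
    have h1 := spectrum.pow_mem_pow T (k ^ 2) hz
    have h2 : T ^ (k ^ 2) = (Unitary.toUnits (π (diagM (k : ZMod p) hk0)) : Matrix (Fin n) (Fin n) ℂ)
        * T * ((Unitary.toUnits (π (diagM (k : ZMod p) hk0)))⁻¹ :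
          (Matrix (Fin n) (Fin n) ℂ)ˣ) := by
      rw [hT, ← SubmonoidClass.coe_pow, ← map_pow, upperM_pow]
      have := diag_conj (k : ZMod p) hk0 1
      rw [mul_one] at this
      rw [Nat.cast_pow, ← this, map_mul, map_mul, map_inv, Submonoid.coe_mul, Submonoid.coe_mul]
      rfl
    rw [h2, spectrum.units_conjugate] at h1
    exact h1
  have hinj : Set.InjOn (fun k : ℕ => z ^ (k ^ 2)) (Finset.Icc 1 ((p - 1) / 2)) := by
    intro k hk l hl hkl
    simp only [Finset.coe_Icc, Set.mem_Icc] at hk hl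
    have h1 : k ^ 2 ≡ l ^ 2 [MOD p] := by
      have h0 : z ^ (k ^ 2) = z ^ (l ^ 2) := hkl
      rw [← pow_mod_orderOf z (k ^ 2), ← pow_mod_orderOf z (l ^ 2), hord] at h0
      have hprim : IsPrimitiveRoot z p := hord ▸ IsPrimitiveRoot.orderOf z
      exact hprim.pow_inj (Nat.mod_lt _ hp.pos) (Nat.mod_lt _ hp.pos) h0
    have h2 : ((k : ZMod p) - l) * (k + l) = 0 := by
      have := (ZMod.natCast_eq_natCast_iff _ _ _).2 h1
      push_cast at this
      linear_combination this
    rcases mul_eq_zero.1 h2 with h | h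
    · rw [sub_eq_zero, ZMod.natCast_eq_natCast_iff'] at h
      rwa [Nat.mod_eq_of_lt (by omega), Nat.mod_eq_of_lt (by omega)] at h
    · exfalso
      have h3 : ((k + l : ℕ) : ZMod p) = 0 := by exact_mod_cast h
      rw [ZMod.natCast_eq_zero_iff] at h3
      have := Nat.le_of_dvd (by omega) h3
      omega
  have h1 := Finset.card_le_card_of_injOn _ hsq hinj
  rw [Nat.card_Icc] at h1
  have h2 : T.charpoly.roots.toFinset.card ≤ n := by
    refine (Multiset.toFinset_card_le _).trans ((Polynomial.card_roots' _).trans ?_)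
    rw [Matrix.charpoly_natDegree_eq_dim, Fintype.card_fin]
  omega

def IsScal (g : Matrix (Fin 2) (Fin 2) (ZMod p)) : Prop := g 0 1 = 0 ∧ g 1 0 = 0 ∧ g 0 0 = g 1 1

open Classical in
lemma aux_quad (α β : ZMod p) :
    (Finset.univ.filter fun z : ZMod p × ZMod p =>
      z.1 ^ 2 + α * z.1 * z.2 + β * z.2 ^ 2 = 1).card ≤ 2 * p := by
  have h := Finset.card_le_mul_card_image
    (s := Finset.univ.filter fun z : ZMod p × ZMod p =>
      z.1 ^ 2 + α * z.1 * z.2 + β * z.2 ^ 2 = 1) (f := Prod.snd) 2 ?_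
  · refine h.trans ?_
    apply Nat.mul_le_mul_left
    refine (Finset.card_le_univ _).trans ?_
    rw [ZMod.card]
  · intro y _
    set q : Polynomial (ZMod p) := Polynomial.C 1 * Polynomial.X ^ 2 +
      Polynomial.C (α * y) * Polynomial.X + Polynomial.C (β * y ^ 2 - 1) with hq
    have hq2 : q.natDegree = 2 := Polynomial.natDegree_quadratic one_ne_zero
    have hq0 : q ≠ 0 := by intro h; rw [h] at hq2; simp at hq2
    have : q.roots.toFinset.card ≤ 2 :=
      (Multiset.toFinset_card_le _).trans ((Polynomial.card_roots' _).trans hq2.le)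
    refine le_trans ?_ this
    apply Finset.card_le_card_of_injOn Prod.fst
    · intro z hz
      simp only [Finset.coe_filter, Finset.mem_filter, Finset.mem_univ, true_and,
        Set.mem_ofPred_eq] at hz
      simp only [Multiset.mem_toFinset, Finset.mem_coe]
      rw [Polynomial.mem_roots hq0, Polynomial.IsRoot.def]
      simp [hq]
      rw [← hz.2]
      linear_combination hz.1
    · rintro ⟨a, b⟩ hz ⟨a', b'⟩ hz' h
      simp at hz hz' h
      simp [hz.2, hz'.2, h]

open Classical in
lemma aux_centr (g : SL 2 p) (hg : ¬ IsScal (g : Matrix (Fin 2) (Fin 2) (ZMod p))) :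
    (Finset.univ.filter fun h : SL 2 p => h * g = g * h).card ≤ 2 * p := by
  have hcomm : ∀ h : SL 2 p, h * g = g * h →
      h 0 1 * g 1 0 = g 0 1 * h 1 0 ∧
      h 0 0 * g 0 1 + h 0 1 * g 1 1 = g 0 0 * h 0 1 + g 0 1 * h 1 1 ∧
      h 1 0 * g 0 0 + h 1 1 * g 1 0 = g 1 0 * h 0 0 + g 1 1 * h 1 0 ∧
      h 0 0 * h 1 1 - h 0 1 * h 1 0 = 1 := by
    intro h hh
    have hdet := h.det_coe
    rw [Matrix.det_fin_two] at hdet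
    have e : ∀ i j, (h * g : SL 2 p) i j = (g * h : SL 2 p) i j := by rw [hh]; simp
    have e1 := e 0 0
    have e2 := e 0 1
    have e3 := e 1 0
    simp [Matrix.mul_apply, Fin.sum_univ_two] at e1 e2 e3
    refine ⟨by linear_combination e1, e2, e3, hdet⟩
  by_cases hb : g 0 1 = 0
  · by_cases hc : g 1 0 = 0
    · have ha : g 0 0 - g 1 1 ≠ 0 := fun h => hg ⟨hb, hc, sub_eq_zero.1 h⟩
      have : (Finset.univ.filter fun h : SL 2 p => h * g = g * h).card
          ≤ (Finset.univ : Finset (ZMod p)).card := by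
        apply Finset.card_le_card_of_injOn (fun h => h 0 0) (fun _ _ => Finset.mem_coe.2 (Finset.mem_univ _))
        intro h hh k hk hhk
        simp only [Finset.coe_filter, Finset.mem_univ, true_and, Set.mem_ofPred_eq] at hh hk hhk
        obtain ⟨-, a2, a3, a4⟩ := hcomm h hh
        obtain ⟨-, b2, b3, b4⟩ := hcomm k hk
        rw [hb] at a2 b2
        rw [hc] at a3 b3
        have a5 : h 0 1 = 0 := (mul_eq_zero.1 (by linear_combination -a2 :
          (g 0 0 - g 1 1) * h 0 1 = 0)).resolve_left ha
        have b5 : k 0 1 = 0 := (mul_eq_zero.1 (by linear_combination -b2 :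
          (g 0 0 - g 1 1) * k 0 1 = 0)).resolve_left ha
        have a6 : h 1 0 = 0 := (mul_eq_zero.1 (by linear_combination a3 :
          (g 0 0 - g 1 1) * h 1 0 = 0)).resolve_left ha
        have b6 : k 1 0 = 0 := (mul_eq_zero.1 (by linear_combination b3 :
          (g 0 0 - g 1 1) * k 1 0 = 0)).resolve_left ha
        have h0 : k 0 0 ≠ 0 := by
          intro h; rw [h, b5] at b4; simp at b4
        rw [a5, hhk] at a4
        rw [b5] at b4
        have h11 : h 1 1 = k 1 1 := mul_left_cancel₀ h0 (by linear_combination a4 - b4)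
        ext i j
        fin_cases i <;> fin_cases j
        · exact hhk
        · exact a5.trans b5.symm
        · exact a6.trans b6.symm
        · exact h11
      rw [Finset.card_univ, ZMod.card] at this
      omega
    · refine le_trans ?_ (aux_quad ((g 1 1 - g 0 0) / g 1 0) (- g 0 1 / g 1 0))
      apply Finset.card_le_card_of_injOn (fun h => (h 0 0, h 1 0))
      · intro h hh
        simp only [Finset.coe_filter, Finset.mem_univ, true_and, Set.mem_ofPred_eq] at hh ⊢
        obtain ⟨a1, a2, a3, a4⟩ := hcomm h hh
        field_simp
        linear_combination (g 1 0) * a4 + h 1 0 * a1 - h 0 0 * a3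
      · intro h hh k hk hhk
        simp only [Finset.coe_filter, Finset.mem_univ, true_and, Set.mem_ofPred_eq,
          Prod.mk.injEq] at hh hk hhk
        obtain ⟨a1, a2, a3, a4⟩ := hcomm h hh
        obtain ⟨b1, b2, b3, b4⟩ := hcomm k hk
        obtain ⟨e1, e2⟩ := hhk
        rw [e1, e2] at a3
        rw [e2] at a1
        ext i j
        fin_cases i <;> fin_cases j
        · exact e1
        · exact mul_right_cancel₀ hc (a1.trans b1.symm)
        · exact e2
        · exact mul_right_cancel₀ hc (show h 1 1 * g 1 0 = k 1 1 * g 1 0 by linear_combination a3 - b3)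
  · refine le_trans ?_ (aux_quad ((g 1 1 - g 0 0) / g 0 1) (- g 1 0 / g 0 1))
    apply Finset.card_le_card_of_injOn (fun h => (h 0 0, h 0 1))
    · intro h hh
      simp only [Finset.coe_filter, Finset.mem_univ, true_and, Set.mem_ofPred_eq] at hh ⊢
      obtain ⟨a1, a2, a3, a4⟩ := hcomm h hh
      field_simp
      linear_combination (g 0 1) * a4 - h 0 1 * a1 + h 0 0 * a2
    · intro h hh k hk hhk
      simp only [Finset.coe_filter, Finset.mem_univ, true_and, Set.mem_ofPred_eq,
        Prod.mk.injEq] at hh hk hhk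
      obtain ⟨a1, a2, a3, a4⟩ := hcomm h hh
      obtain ⟨b1, b2, b3, b4⟩ := hcomm k hk
      obtain ⟨e1, e2⟩ := hhk
      rw [e1, e2] at a2
      rw [e2] at a1
      ext i j
      fin_cases i <;> fin_cases j
      · exact e1
      · exact e2
      · exact mul_left_cancel₀ hb (a1.symm.trans b1)
      · exact mul_left_cancel₀ hb (show g 0 1 * h 1 1 = g 0 1 * k 1 1 by linear_combination b2 - a2)

end SLPart

section WordPart

open Classical in
lemma aux_avg {p : ℕ} [Fact p.Prime] {X : Type*} [Fintype X] (φ : ZMod p → X → X)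
    (hφ : ∀ t, Function.Bijective (φ t)) (B Bad : X → Prop) (k : ℕ)
    (h : ∀ x, ¬ Bad x → (Finset.univ.filter fun t => B (φ t x)).card ≤ k) :
    p * (Finset.univ.filter B).card ≤
      k * Fintype.card X + p * (Finset.univ.filter Bad).card := by
  have h1 : p * (Finset.univ.filter B).card
      = ∑ t : ZMod p, (Finset.univ.filter fun x => B (φ t x)).card := by
    have : ∀ t : ZMod p, (Finset.univ.filter fun x => B (φ t x)).card
        = (Finset.univ.filter B).card := by
      intro t
      apply Finset.card_bijective (φ t) (hφ t)
      intro x; simp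
    simp [this, ZMod.card]
  have h2 : ∑ t : ZMod p, (Finset.univ.filter fun x => B (φ t x)).card
      = ∑ x : X, (Finset.univ.filter fun t => B (φ t x)).card := by
    simp_rw [Finset.card_filter]
    exact Finset.sum_comm
  rw [h1, h2]
  have h3 : ∀ x : X, (Finset.univ.filter fun t => B (φ t x)).card
      ≤ k + p * (if Bad x then 1 else 0) := by
    intro x
    by_cases hx : Bad x
    · have := Finset.card_le_univ (Finset.univ.filter fun t => B (φ t x))
      rw [ZMod.card] at this
      simp only [hx, if_true]
      omega
    · simpa [hx] using h x hx
  refine (Finset.sum_le_sum fun x _ => h3 x).trans ?_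
  rw [Finset.sum_add_distrib, ← Finset.mul_sum, ← Finset.card_filter]
  simp [mul_comm]

variable {p : ℕ} [Fact p.Prime] {d : ℕ}

def vv (i : Fin d) : Fin 2 → ZMod p := ![1, ((i : ℕ) : ZMod p)]

def ff (i : Fin d) : Fin 2 → ZMod p := ![-((i : ℕ) : ZMod p), 1]

/-- The transvection `1 + t v f`. -/
def transM (t a : ZMod p) : SL 2 p :=
  ⟨!![1 - t * a, t; -(t * a ^ 2), 1 + t * a], by simp [Matrix.det_fin_two]; ring⟩

lemma transM_coe (t : ZMod p) (i : Fin d) :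
    (transM t ((i : ℕ) : ZMod p) : Matrix (Fin 2) (Fin 2) (ZMod p))
      = 1 + t • Matrix.vecMulVec (vv i) (ff i) := by
  ext a b
  fin_cases a <;> fin_cases b <;> simp [transM, vv, ff]
  · ring
  · left; ring

lemma transM_inv (t a : ZMod p) : (transM t a)⁻¹ = transM (-t) a := by
  rw [Matrix.SpecialLinearGroup.SL2_inv_expl]
  ext i j
  fin_cases i <;> fin_cases j <;> simp [transM]
  ring

def lett {G : Type*} [Group G] (S : Fin d → G) (x : Fin d × Bool) : G :=
  cond x.2 (S x.1) (S x.1)⁻¹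

def PolyFun (F : ZMod p → Matrix (Fin 2) (Fin 2) (ZMod p)) (l : ℕ)
    (L : Matrix (Fin 2) (Fin 2) (ZMod p)) : Prop :=
  ∃ P : Fin 2 → Fin 2 → Polynomial (ZMod p), ∀ i j, (P i j).natDegree ≤ l ∧
    (P i j).coeff l = L i j ∧ ∀ t, (P i j).eval t = F t i j

lemma PolyFun.mul {F F' : ZMod p → Matrix (Fin 2) (Fin 2) (ZMod p)} {l l' : ℕ}
    {L L' : Matrix (Fin 2) (Fin 2) (ZMod p)} (h : PolyFun F l L) (h' : PolyFun F' l' L') :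
    PolyFun (fun t => F t * F' t) (l + l') (L * L') := by
  obtain ⟨P, hP⟩ := h
  obtain ⟨P', hP'⟩ := h'
  refine ⟨fun i j => ∑ k, P i k * P' k j, fun i j => ⟨?_, ?_, ?_⟩⟩
  · exact Polynomial.natDegree_sum_le_of_forall_le _ _ fun k _ =>
      Polynomial.natDegree_mul_le_of_le (hP i k).1 (hP' k j).1
  · rw [Polynomial.finsetSum_coeff, Matrix.mul_apply]
    refine Finset.sum_congr rfl fun k _ => ?_
    rw [Polynomial.coeff_mul_add_eq_of_natDegree_le (hP i k).1 (hP' k j).1, (hP i k).2.1,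
      (hP' k j).2.1]
  · intro t
    change _ = (F t * F' t) i j
    rw [Polynomial.eval_finsetSum, Matrix.mul_apply]
    refine Finset.sum_congr rfl fun k _ => ?_
    rw [Polynomial.eval_mul, (hP i k).2.2, (hP' k j).2.2]

lemma PolyFun.linear (A B : Matrix (Fin 2) (Fin 2) (ZMod p)) :
    PolyFun (fun t => A + t • B) 1 B := by
  refine ⟨fun i j => Polynomial.C (B i j) * Polynomial.X + Polynomial.C (A i j),
    fun i j => ⟨Polynomial.natDegree_linear_le, ?_, ?_⟩⟩
  · simp [Polynomial.coeff_C]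
  · intro t; simp; ring

def al (S : Fin d → SL 2 p) (x : Fin d × Bool) : Fin 2 → ZMod p :=
  cond x.2 (Matrix.mulVec (S x.1 : Matrix (Fin 2) (Fin 2) (ZMod p)) (vv x.1)) (-(vv x.1))

def be (S : Fin d → SL 2 p) (x : Fin d × Bool) : Fin 2 → ZMod p :=
  cond x.2 (ff x.1)
    (Matrix.vecMul (ff x.1) ((S x.1)⁻¹ : SL 2 p).1)

def phiT (t : ZMod p) (S : Fin d → SL 2 p) : Fin d → SL 2 p :=
  fun i => S i * transM t ((i : ℕ) : ZMod p)

lemma phiT_bij (t : ZMod p) : Function.Bijective (phiT (d := d) t) := by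
  have : phiT (d := d) t = fun S => S * (fun i : Fin d => transM t ((i : ℕ) : ZMod p)) := rfl
  rw [this]
  exact Group.mulRight_bijective _

lemma polyFun_lett (S : Fin d → SL 2 p) (x : Fin d × Bool) :
    PolyFun (fun t => (lett (phiT t S) x : SL 2 p).1) 1
      (Matrix.vecMulVec (al S x) (be S x)) := by
  obtain ⟨i, b⟩ := x
  cases b
  · convert PolyFun.linear (p := p) ((S i)⁻¹ : SL 2 p).1
      (Matrix.vecMulVec (al S (i, false)) (be S (i, false))) using 2 with t
    simp only [lett, phiT, cond_false, mul_inv_rev, transM_inv, Matrix.SpecialLinearGroup.coe_mul,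
      transM_coe, al, be, add_mul, one_mul]
    simp [Matrix.vecMulVec_mul, Matrix.neg_vecMulVec]
  · convert PolyFun.linear (p := p) (S i).1
      (Matrix.vecMulVec (al S (i, true)) (be S (i, true))) using 2 with t
    simp only [lett, phiT, cond_true, Matrix.SpecialLinearGroup.coe_mul,
      transM_coe, al, be, mul_add, mul_one]
    simp [Matrix.mul_vecMulVec]

def GoodS (S : Fin d → SL 2 p) : Prop :=
  ∀ x y : Fin d × Bool, (x.1 = y.1 → x.2 = y.2) → be S x ⬝ᵥ al S y ≠ 0

lemma polyFun_word (S : Fin d → SL 2 p) (hS : GoodS S) (L : List (Fin d × Bool)) :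
    ∀ x, List.IsChain (fun a b : Fin d × Bool => a.1 = b.1 → a.2 = b.2) (x :: L) →
    ∃ c : ZMod p, c ≠ 0 ∧ ∃ b : Fin 2 → ZMod p, b ≠ 0 ∧
      PolyFun (fun t => (((x :: L).map (lett (phiT t S))).prod : SL 2 p).1)
        (L.length + 1) (c • Matrix.vecMulVec (al S x) b) := by
  induction L with
  | nil =>
    intro x _
    refine ⟨1, one_ne_zero, be S x, ?_, ?_⟩
    · intro h
      apply hS x x (fun _ => rfl)
      rw [h, zero_dotProduct]
    · simpa using polyFun_lett S x
  | cons y L ih =>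
    intro x hx
    rw [List.isChain_cons_cons] at hx
    obtain ⟨c, hc, b, hb, hP⟩ := ih y hx.2
    refine ⟨c * (be S x ⬝ᵥ al S y), mul_ne_zero hc (hS x y hx.1), b, hb, ?_⟩
    have h := (polyFun_lett S x).mul hP
    convert h using 1
    · funext t
      rw [List.map_cons, List.prod_cons]
      rfl
    · simp only [List.length_cons]; ring
    · rw [Matrix.mul_smul, Matrix.vecMulVec_mul_vecMulVec, Matrix.vecMulVec_smul, smul_smul]

open Classical in
lemma roots_count {F : ZMod p → Matrix (Fin 2) (Fin 2) (ZMod p)} {l : ℕ} {c : ZMod p}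
    {a b : Fin 2 → ZMod p} (hc : c ≠ 0) (ha : a ≠ 0) (hb : b ≠ 0)
    (hF : PolyFun F l (c • Matrix.vecMulVec a b)) :
    (Finset.univ.filter fun t => IsScal (F t)).card ≤ l := by
  obtain ⟨P, hP⟩ := hF
  have main : ∀ q : Polynomial (ZMod p), q.natDegree ≤ l → q.coeff l ≠ 0 →
      (∀ t, IsScal (F t) → q.eval t = 0) →
      (Finset.univ.filter fun t => IsScal (F t)).card ≤ l := by
    intro q hq hql hev
    have hq0 : q ≠ 0 := by rintro rfl; simp at hql
    refine le_trans (Finset.card_le_card (t := q.roots.toFinset) ?_)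
      ((Multiset.toFinset_card_le _).trans ((Polynomial.card_roots' _).trans hq))
    intro t ht
    rw [Multiset.mem_toFinset, Polynomial.mem_roots hq0]
    exact hev t (Finset.mem_filter.1 ht).2
  by_cases h01 : a 0 * b 1 = 0
  · by_cases h10 : a 1 * b 0 = 0
    · have hne : a 0 * b 0 - a 1 * b 1 ≠ 0 := by
        intro h
        have ha' : a 0 ≠ 0 ∨ a 1 ≠ 0 := by
          by_contra! hh
          apply ha; ext i; fin_cases i <;> simp [hh]
        apply hb
        ext i
        rcases ha' with h0 | h0
        · have b1 : b 1 = 0 := (mul_eq_zero.1 h01).resolve_left h0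
          have b0 : b 0 = 0 := by
            rw [b1, mul_zero, sub_zero] at h
            exact (mul_eq_zero.1 h).resolve_left h0
          fin_cases i <;> simp [b0, b1]
        · have b0 : b 0 = 0 := (mul_eq_zero.1 h10).resolve_left h0
          have b1 : b 1 = 0 := by
            rw [b0, mul_zero, zero_sub, neg_eq_zero] at h
            exact (mul_eq_zero.1 h).resolve_left h0
          fin_cases i <;> simp [b0, b1]
      apply main (P 0 0 - P 1 1)
      · exact Polynomial.natDegree_sub_le_of_le (hP 0 0).1 (hP 1 1).1 |>.trans (by simp)
      · rw [Polynomial.coeff_sub, (hP 0 0).2.1, (hP 1 1).2.1]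
        simp only [Matrix.smul_apply, Matrix.vecMulVec_apply, smul_eq_mul]
        rw [← mul_sub]
        exact mul_ne_zero hc hne
      · intro t ht
        rw [Polynomial.eval_sub, (hP 0 0).2.2, (hP 1 1).2.2, ht.2.2, sub_self]
    · apply main (P 1 0) (hP 1 0).1
      · rw [(hP 1 0).2.1]
        exact mul_ne_zero hc h10
      · intro t ht
        rw [(hP 1 0).2.2, ht.2.1]
  · apply main (P 0 1) (hP 0 1).1
    · rw [(hP 0 1).2.1]
      exact mul_ne_zero hc h01
    · intro t ht
      rw [(hP 0 1).2.2, ht.1]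

def phiL (j : Fin d) (s : ZMod p) (S : Fin d → SL 2 p) : Fin d → SL 2 p :=
  S * (Pi.mulSingle j (lowerM s))

lemma phiL_bij (j : Fin d) (s : ZMod p) : Function.Bijective (phiL j s) :=
  Group.mulRight_bijective _

lemma phiL_self (j : Fin d) (s : ZMod p) (S : Fin d → SL 2 p) :
    phiL j s S j = S j * lowerM s := by simp [phiL]

lemma phiL_ne (j i : Fin d) (h : i ≠ j) (s : ZMod p) (S : Fin d → SL 2 p) :
    phiL j s S i = S i := by simp [phiL, Pi.mulSingle_eq_of_ne h]

lemma vecMul_ne (r : Fin 2 → ZMod p) (hr : r ≠ 0) (g : SL 2 p) :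
    Matrix.vecMul r g.1 ≠ 0 := by
  intro h
  apply hr
  have h1 : Matrix.vecMul (Matrix.vecMul r g.1) (g⁻¹ : SL 2 p).1 = r := by
    rw [Matrix.vecMul_vecMul]
    have : g.1 * (g⁻¹ : SL 2 p).1 = ((g * g⁻¹ : SL 2 p)).1 := rfl
    rw [this, mul_inv_cancel]
    simp
  rw [← h1, h, Matrix.zero_vecMul]

lemma mulVec_ne (r : Fin 2 → ZMod p) (hr : r ≠ 0) (g : SL 2 p) :
    Matrix.mulVec g.1 r ≠ 0 := by
  intro h
  apply hr
  have h1 : Matrix.mulVec (g⁻¹ : SL 2 p).1 (Matrix.mulVec g.1 r) = r := by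
    rw [Matrix.mulVec_mulVec]
    have : (g⁻¹ : SL 2 p).1 * g.1 = ((g⁻¹ * g : SL 2 p)).1 := rfl
    rw [this, inv_mul_cancel]
    simp
  rw [← h1, h, Matrix.mulVec_zero]

lemma ff_ne (i : Fin d) : (ff i : Fin 2 → ZMod p) ≠ 0 := by
  intro h
  have := congrFun h 1
  simp [ff] at this

lemma vv_ne (i : Fin d) : (vv i : Fin 2 → ZMod p) ≠ 0 := by
  intro h
  have := congrFun h 0
  simp [vv] at this

lemma be_ne (S : Fin d → SL 2 p) (x : Fin d × Bool) : be S x ≠ 0 := by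
  obtain ⟨i, b⟩ := x
  cases b
  · exact vecMul_ne _ (ff_ne i) _
  · exact ff_ne i

open Classical in
lemma bad_pair (hdp : d ≤ p) (x y : Fin d × Bool) (hxy : x.1 = y.1 → x.2 = y.2) :
    p * (Finset.univ.filter fun S : Fin d → SL 2 p => be S x ⬝ᵥ al S y = 0).card
      ≤ Fintype.card (Fin d → SL 2 p) := by
  obtain ⟨i, b⟩ := x
  obtain ⟨j, b'⟩ := y
  simp only at hxy
  cases b'
  · cases b
    · have := aux_avg (phiL i) (phiL_bij i)
        (fun S : Fin d → SL 2 p => be S (i, false) ⬝ᵥ al S (j, false) = 0)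
        (fun _ => False) 1 ?_
      · simpa using this
      intro S _
      rw [Finset.card_le_one]
      intro s hs s' hs'
      simp only [Finset.mem_filter, Finset.mem_univ, true_and] at hs hs'
      set r := Matrix.mulVec ((S i)⁻¹ : SL 2 p).1 (vv j) with hr
      have key : ∀ s, be (phiL i s S) (i, false) ⬝ᵥ al (phiL i s S) (j, false)
          = (((i : ℕ) : ZMod p) + s) * r 0 - r 1 := by
        intro s
        have hinv : (lowerM s)⁻¹ = lowerM (-s) :=
          inv_eq_of_mul_eq_one_right (by rw [lowerM_mul, add_neg_cancel, lowerM_zero])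
        simp only [be, al, cond_false, phiL_self, mul_inv_rev, hinv,
          Matrix.SpecialLinearGroup.coe_mul]
        rw [← Matrix.vecMul_vecMul, ← Matrix.dotProduct_mulVec, Matrix.mulVec_neg]
        change _ ⬝ᵥ (-r) = _
        simp [lowerM_coe, ff, dotProduct, Matrix.vecMul, Fin.sum_univ_two]
        ring
      rw [key] at hs hs'
      have hr0 : r ≠ 0 := mulVec_ne _ (vv_ne j) _
      have h1 : (s - s') * r 0 = 0 := by linear_combination hs - hs'
      rcases mul_eq_zero.1 h1 with h | h
      · exact sub_eq_zero.1 h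
      · exfalso
        apply hr0
        rw [h] at hs
        have h2 : r 1 = 0 := by linear_combination -hs
        ext a; fin_cases a <;> simp [h, h2]
    · have hij : i ≠ j := fun h => by simpa using hxy h
      have : (Finset.univ.filter fun S : Fin d → SL 2 p =>
          be S (i, true) ⬝ᵥ al S (j, false) = 0) = ∅ := by
        apply Finset.filter_eq_empty_iff.2
        intro S _ h
        simp [be, al, ff, vv, dotProduct, Fin.sum_univ_two] at h
        have h2 : ((i : ℕ) : ZMod p) = ((j : ℕ) : ZMod p) := by linear_combination h
        rw [ZMod.natCast_eq_natCast_iff', Nat.mod_eq_of_lt (by omega),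
          Nat.mod_eq_of_lt (by omega)] at h2
        exact hij (Fin.ext h2)
      rw [this]; simp
  · have := aux_avg (phiL j) (phiL_bij j)
        (fun S : Fin d → SL 2 p => be S (i, b) ⬝ᵥ al S (j, true) = 0)
        (fun _ => False) 1 ?_
    · simpa using this
    intro S _
    rw [Finset.card_le_one]
    intro s hs s' hs'
    simp only [Finset.mem_filter, Finset.mem_univ, true_and] at hs hs'
    have hbe : ∀ s, be (phiL j s S) (i, b) = be S (i, b) := by
      intro s
      cases b
      · have hij : i ≠ j := fun h => by simpa using hxy h
        simp only [be, phiL_ne j i hij]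
      · rfl
    set r := Matrix.vecMul (be S (i, b)) (S j).1 with hr
    have key : ∀ s, be (phiL j s S) (i, b) ⬝ᵥ al (phiL j s S) (j, true)
        = r 0 + (((j : ℕ) : ZMod p) + s) * r 1 := by
      intro s
      rw [hbe]
      simp only [al, cond_true, phiL_self, Matrix.SpecialLinearGroup.coe_mul]
      rw [← Matrix.mulVec_mulVec, Matrix.dotProduct_mulVec]
      change r ⬝ᵥ _ = _
      simp [lowerM_coe, vv, dotProduct, Matrix.mulVec, Fin.sum_univ_two]
      ring
    rw [key] at hs hs'
    have hr0 : r ≠ 0 := vecMul_ne _ (be_ne _ _) _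
    have h1 : (s - s') * r 1 = 0 := by linear_combination hs - hs'
    rcases mul_eq_zero.1 h1 with h | h
    · exact sub_eq_zero.1 h
    · exfalso
      apply hr0
      rw [h] at hs
      have h2 : r 0 = 0 := by linear_combination hs
      ext a; fin_cases a <;> simp [h, h2]

open Classical in
lemma bad_count (hdp : d ≤ p) :
    p * (Finset.univ.filter fun S : Fin d → SL 2 p => ¬ GoodS S).card
      ≤ 4 * d ^ 2 * Fintype.card (Fin d → SL 2 p) := by
  set A : Finset ((Fin d × Bool) × (Fin d × Bool)) :=
    Finset.univ.filter fun z => (z.1.1 = z.2.1 → z.1.2 = z.2.2) with hA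
  have hsub : (Finset.univ.filter fun S : Fin d → SL 2 p => ¬ GoodS S) ⊆
      A.biUnion fun z => Finset.univ.filter fun S : Fin d → SL 2 p => be S z.1 ⬝ᵥ al S z.2 = 0 := by
    intro S hS
    simp only [Finset.mem_filter, Finset.mem_univ, true_and, GoodS, not_forall, not_not] at hS
    obtain ⟨x, y, hxy, h⟩ := hS
    simp only [Finset.mem_biUnion, Finset.mem_filter, Finset.mem_univ, true_and, hA]
    exact ⟨(x, y), hxy, h⟩
  have h1 := (Finset.card_le_card hsub).trans Finset.card_biUnion_le
  have hAc : A.card ≤ 4 * d ^ 2 := by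
    refine (Finset.card_le_univ _).trans ?_
    simp only [Fintype.card_prod, Fintype.card_fin, Fintype.card_bool]
    apply le_of_eq; ring
  calc _ ≤ p * _ := Nat.mul_le_mul_left p h1
    _ = ∑ z ∈ A, p * (Finset.univ.filter fun S : Fin d → SL 2 p =>
        be S z.1 ⬝ᵥ al S z.2 = 0).card := Finset.mul_sum _ _ _
    _ ≤ ∑ z ∈ A, Fintype.card (Fin d → SL 2 p) :=
        Finset.sum_le_sum fun z hz => bad_pair hdp z.1 z.2 (Finset.mem_filter.1 hz).2
    _ = A.card * Fintype.card (Fin d → SL 2 p) := by simp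
    _ ≤ _ := Nat.mul_le_mul_right _ hAc

lemma wordProd_eq {m : ℕ} (w : Fin m → Fin d × Bool) :
    wordProd w = FreeGroup.mk (List.ofFn w) := by
  rw [← FreeGroup.lift_of_apply (FreeGroup.mk (List.ofFn w)), FreeGroup.lift_mk, wordProd,
    List.map_ofFn]
  congr 2
  funext j
  simp only [Function.comp]
  cases (w j).2 <;> rfl

lemma wordEval_eq {G : Type*} [Group G] {m : ℕ} (S : Fin d → G) (w : Fin m → Fin d × Bool) :
    wordEval S w = FreeGroup.lift S (wordProd w) := by
  rw [wordProd_eq, FreeGroup.lift_mk, wordEval, List.map_ofFn]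
  congr 2
  funext j
  simp only [Function.comp]
  cases (w j).2 <;> rfl

open Classical in
lemma word_count (hdp : d ≤ p) {m : ℕ} (w : Fin m → Fin d × Bool) (hw : wordProd w ≠ 1) :
    p * (Finset.univ.filter fun S : Fin d → SL 2 p => IsScal (wordEval S w).1).card
      ≤ (m + 4 * d ^ 2) * Fintype.card (Fin d → SL 2 p) := by
  have hlen : (wordProd w).toWord.length ≤ m := by
    have := FreeGroup.norm_mk_le (L₁ := List.ofFn w)
    rw [← wordProd_eq] at this
    simpa [FreeGroup.norm] using this
  have hne : (wordProd w).toWord ≠ [] := by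
    rwa [Ne, FreeGroup.toWord_eq_nil_iff]
  have hred : FreeGroup.IsReduced (wordProd w).toWord := FreeGroup.isReduced_toWord
  have hev : ∀ S : Fin d → SL 2 p,
      wordEval S w = ((wordProd w).toWord.map (lett S)).prod := by
    intro S
    rw [wordEval_eq]
    conv_lhs => rw [← FreeGroup.mk_toWord (x := wordProd w)]
    rw [FreeGroup.lift_mk]
    rfl
  obtain ⟨x, L, hL⟩ := List.exists_cons_of_ne_nil hne
  rw [hL] at hlen hred hev
  have h := aux_avg (phiT (d := d)) phiT_bij
    (fun S : Fin d → SL 2 p => IsScal (wordEval S w).1) (fun S => ¬ GoodS S) m ?_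
  · refine h.trans ?_
    rw [add_mul]
    refine Nat.add_le_add_left ?_ _
    convert bad_count hdp
  · intro S hS
    rw [not_not] at hS
    obtain ⟨c, hc, b, hb, hP⟩ := polyFun_word S hS L x hred
    have ha : al S x ≠ 0 := by
      intro h
      apply hS x x (fun _ => rfl)
      rw [h, dotProduct_zero]
    simp_rw [hev]
    exact (roots_count hc ha hb hP).trans hlen

end WordPart

section FinalPart

lemma sum_pow_words {R ι : Type*} [Semiring R] [Fintype ι] (f : ι → R) (m : ℕ) :
    (∑ x, f x) ^ m = ∑ w : Fin m → ι, (List.ofFn fun j => f (w j)).prod := by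
  induction m with
  | zero => simp
  | succ m ih =>
    rw [pow_succ', ih, ← (Fin.consEquiv (fun _ : Fin (m + 1) => ι)).sum_comp,
      Fintype.sum_prod_type, Finset.sum_mul_sum]
    refine Finset.sum_congr rfl fun x _ => Finset.sum_congr rfl fun w _ => ?_
    simp [Fin.consEquiv, List.ofFn_succ]

lemma Amat_pow_trace {G : Type*} [Group G] {n d : ℕ}
    (π : G →* Matrix.unitaryGroup (Fin n) ℂ) (S : Fin d → G) (m : ℕ) :
    (Amat π S ^ m).trace = ∑ w : Fin m → Fin d × Bool,
      (π (wordEval S w) : Matrix (Fin n) (Fin n) ℂ).trace := by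
  have hA : Amat π S = ∑ x : Fin d × Bool,
      ((π (if x.2 then S x.1 else (S x.1)⁻¹) : Matrix.unitaryGroup (Fin n) ℂ) :
        Matrix (Fin n) (Fin n) ℂ) := by
    rw [Fintype.sum_prod_type]
    simp only [Amat, Fintype.sum_bool, if_true, Bool.false_eq_true, if_false, map_inv]
    refine Finset.sum_congr rfl fun i _ => ?_
    congr 1
    first
      | rfl
      | exact Matrix.inv_eq_left_inv (Matrix.UnitaryGroup.star_mul_self _)
  rw [hA, sum_pow_words, Matrix.trace_sum]
  refine Finset.sum_congr rfl fun w _ => ?_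
  congr 1
  rw [wordEval, map_list_prod, List.map_ofFn, SubmonoidClass.coe_list_prod, List.map_ofFn]
  rfl

lemma trace_diff_le {p : ℕ} [Fact p.Prime] {n d m : ℕ}
    (π : SL 2 p →* Matrix.unitaryGroup (Fin n) ℂ) (hirr : IsIrreducibleRep π) (hn : 0 < n)
    (S : Fin d → SL 2 p)
    (hS : ∀ w : Fin m → Fin d × Bool, wordProd w ≠ 1 → ¬ IsScal (wordEval S w).1) :
    |(Amat π S ^ m).trace.re / n - (Ntriv d m : ℝ)| ≤ (2 * d : ℝ) ^ m * (√(2 * p) / n) := by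
  classical
  have hn' : (n : ℝ) ≠ 0 := by exact_mod_cast hn.ne'
  have hN : (Ntriv d m : ℝ) = ∑ w : Fin m → Fin d × Bool, if wordProd w = 1 then (1 : ℝ) else 0 := by
    rw [Ntriv, Nat.card_eq_fintype_card, Fintype.card_subtype, Finset.sum_boole]
  have h1 : (Amat π S ^ m).trace.re / n - (Ntriv d m : ℝ)
      = ∑ w : Fin m → Fin d × Bool,
        ((π (wordEval S w) : Matrix (Fin n) (Fin n) ℂ).trace.re / n
          - if wordProd w = 1 then (1 : ℝ) else 0) := by
    rw [hN, Amat_pow_trace, Complex.re_sum, Finset.sum_div, Finset.sum_sub_distrib]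
  rw [h1]
  refine (Finset.abs_sum_le_sum_abs _ _).trans ?_
  have h2 : ∀ w ∈ (Finset.univ : Finset (Fin m → Fin d × Bool)),
      |(π (wordEval S w) : Matrix (Fin n) (Fin n) ℂ).trace.re / n
          - if wordProd w = 1 then (1 : ℝ) else 0| ≤ √(2 * p) / n := by
    intro w _
    by_cases hw : wordProd w = 1
    · rw [if_pos hw, wordEval_eq, hw, map_one, map_one]
      have : ((1 : Matrix.unitaryGroup (Fin n) ℂ) : Matrix (Fin n) (Fin n) ℂ).trace.re = n := by
        simp
      rw [this, div_self hn', sub_self, abs_zero]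
      positivity
    · rw [if_neg hw, sub_zero, abs_div, Nat.abs_cast]
      apply div_le_div_of_nonneg_right _ (Nat.cast_nonneg n)
      refine (Complex.abs_re_le_norm _).trans ?_
      apply Real.le_sqrt_of_sq_le
      have := aux_char_le π hirr hn (wordEval S w) (2 * p) (by
        convert aux_centr (wordEval S w) (hS w hw))
      exact_mod_cast this
  refine (Finset.sum_le_card_nsmul _ _ _ h2).trans ?_
  rw [nsmul_eq_mul]
  apply le_of_eq
  simp [Fintype.card_prod, mul_comm]

end FinalPart

/-- Fix d ≥ 2. There exists C > 0 such that for every prime p, every nontrivial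
irreducible unitary representation π of SL₂(ℤ/pℤ) of dimension d(π), and every integer
1 ≤ m ≤ (1/4)·log_{2d}(p), the proportion of tuples S ∈ SL₂(ℤ/pℤ)^d with
|(1/d(π))·tr(A_{π,S}^m) − N(d,m)| ≥ p^{−1/10} is at most C·p^{−1/4}. -/
theorem stmt12 (d : ℕ) (hd : 2 ≤ d) :
    ∃ C : ℝ, 0 < C ∧
      ∀ (p : ℕ), p.Prime →
        ∀ (dπ : ℕ) (π : SL 2 p →* Matrix.unitaryGroup (Fin dπ) ℂ),
          IsIrreducibleRep π → (∃ g, π g ≠ 1) →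
          ∀ m : ℕ, 1 ≤ m → (m : ℝ) ≤ (1/4 : ℝ) * Real.logb (2 * d) p →
          (Nat.card {S : Fin d → SL 2 p //
              (p : ℝ) ^ (-(1/10 : ℝ)) ≤
                |(Amat π S ^ m).trace.re / dπ - (Ntriv d m : ℝ)|} : ℝ) /
            (Nat.card (Fin d → SL 2 p) : ℝ) ≤ C * (p : ℝ) ^ (-(1/4 : ℝ)) := by
  classical
  refine ⟨32 + 1 + 4 * (d : ℝ) ^ 2, by positivity, ?_⟩
  intro p hp n π hirr hnt m hm hmp
  have : Fact p.Prime := ⟨hp⟩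
  have hp0 : (0 : ℝ) < p := by exact_mod_cast hp.pos
  have hp1 : (1 : ℝ) ≤ p := by exact_mod_cast hp.one_lt.le
  set X := Fintype.card (Fin d → SL 2 p) with hX
  have hXpos : (0 : ℝ) < X := by exact_mod_cast Fintype.card_pos
  rw [Nat.card_eq_fintype_card (α := Fin d → SL 2 p), Nat.card_eq_fintype_card,
    Fintype.card_subtype, div_le_iff₀ hXpos]
  set B := Finset.univ.filter fun S : Fin d → SL 2 p => (p : ℝ) ^ (-(1/10 : ℝ)) ≤
                |(Amat π S ^ m).trace.re / n - (Ntriv d m : ℝ)| with hB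
  set q : ℝ := (p : ℝ) ^ (1/4 : ℝ) with hq
  have hq0 : 0 < q := Real.rpow_pos_of_pos hp0 _
  have hq4 : q ^ 4 = p := by
    rw [hq, ← Real.rpow_natCast, ← Real.rpow_mul hp0.le]; norm_num
  have hqinv : (p : ℝ) ^ (-(1/4 : ℝ)) = q⁻¹ := by rw [Real.rpow_neg hp0.le]
  rw [hqinv]
  have hq1 : 1 ≤ q := Real.one_le_rpow hp1 (by norm_num)
  have hd' : (2 : ℝ) ≤ d := by exact_mod_cast hd
  have hdm : (2 * d : ℝ) ^ m ≤ q := by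
    rw [← Real.rpow_natCast]
    calc (2 * d : ℝ) ^ (m : ℝ) ≤ (2 * d : ℝ) ^ ((1/4 : ℝ) * Real.logb (2 * d) p) :=
          Real.rpow_le_rpow_of_exponent_le (by linarith) hmp
      _ = ((2 * d : ℝ) ^ (Real.logb (2 * d) p)) ^ (1/4 : ℝ) := by
          rw [mul_comm (1/4 : ℝ), Real.rpow_mul (by positivity)]
      _ = q := by rw [Real.rpow_logb (by positivity) (by linarith) hp0]
  have hmq : (m : ℝ) ≤ q := by
    refine le_trans ?_ hdm
    have h1 : (m : ℝ) ≤ 2 ^ m := by exact_mod_cast (Nat.lt_two_pow_self).le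
    exact h1.trans (pow_le_pow_left₀ (by norm_num) (by linarith) m)
  have hdp : d ≤ p := by
    have h1 : (2 * d : ℝ) ≤ (2 * d : ℝ) ^ m := le_self_pow₀ (by linarith) (by omega)
    have h2 : q ≤ p := by
      rw [← hq4]; exact le_self_pow₀ hq1 (by norm_num)
    have : (d : ℝ) ≤ p := by linarith
    exact_mod_cast this
  have hn : 0 < n := by
    rcases Nat.eq_zero_or_pos n with rfl | h
    · obtain ⟨g, hg⟩ := hnt
      exact absurd (Subtype.ext (Subsingleton.elim _ _)) hg
    · exact h
  have hBX : (B.card : ℝ) ≤ X := by exact_mod_cast Finset.card_le_univ B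
  by_cases hbig : q ≤ 32
  · refine hBX.trans (le_mul_of_one_le_left hXpos.le ?_)
    rw [← div_eq_mul_inv, one_le_div hq0]
    nlinarith [sq_nonneg (d : ℝ)]
  push Not at hbig
  -- the main case
  have hdim : (p : ℝ) / 4 ≤ n := by
    have h1 := aux_dim π hnt
    have h2 : p ≤ 2 * n + 2 := by omega
    have h3 : (p : ℝ) ≤ 2 * n + 2 := by exact_mod_cast h2
    have h4 : (32 : ℝ) ≤ p := by
      rw [← hq4]
      exact hbig.le.trans (le_self_pow₀ hq1 (by norm_num))
    linarith
  have hsub : B ⊆ (Finset.univ.filter fun w : Fin m → Fin d × Bool => wordProd w ≠ 1).biUnion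
      fun w => Finset.univ.filter fun S : Fin d → SL 2 p => IsScal (wordEval S w).1 := by
    intro S hS
    rw [hB, Finset.mem_filter] at hS
    by_contra hcon
    simp only [Finset.mem_biUnion, Finset.mem_filter, Finset.mem_univ, true_and, not_exists,
      not_and] at hcon
    have h1 := hS.2.trans (trace_diff_le π hirr hn S hcon)
    have hn' : (0 : ℝ) < n := by exact_mod_cast hn
    have h2 : √(2 * p) / n ≤ 8 / q ^ 2 := by
      have hs : √(2 * p) ≤ 2 * q ^ 2 := by
        apply Real.sqrt_le_iff.2 ⟨by positivity, ?_⟩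
        rw [← hq4]; nlinarith [pow_pos hq0 4]
      rw [div_le_div_iff₀ hn' (by positivity)]
      rw [← hq4] at hdim
      nlinarith [pow_pos hq0 2]
    have h3 : (2 * d : ℝ) ^ m * (√(2 * p) / n) ≤ 8 / q := by
      calc _ ≤ q * (8 / q ^ 2) := mul_le_mul hdm h2 (by positivity) hq0.le
        _ = 8 / q := by field_simp
    have h4 : (p : ℝ) ^ (-(1/10 : ℝ)) = q ^ (-(2/5 : ℝ)) := by
      rw [hq, ← Real.rpow_mul hp0.le]; norm_num
    have h5 : 8 / q < q ^ (-(2/5 : ℝ)) := by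
      have e1 : q ^ (-(2/5 : ℝ)) = q ^ (3/5 : ℝ) / q := by
        rw [eq_div_iff hq0.ne']
        have e3 := Real.rpow_add hq0 (-(2/5 : ℝ)) 1
        rw [Real.rpow_one] at e3
        rw [← e3]; norm_num
      rw [e1]
      apply div_lt_div_of_pos_right _ hq0
      have e2 : (8 : ℝ) = 32 ^ (3/5 : ℝ) := by
        rw [show (32 : ℝ) = 2 ^ (5 : ℝ) by norm_num, ← Real.rpow_mul (by norm_num)]
        norm_num
      rw [e2]
      exact Real.rpow_lt_rpow (by norm_num) hbig (by norm_num)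
    rw [h4] at h1
    linarith
  have hcount : p * B.card ≤ (2 * d) ^ m * ((m + 4 * d ^ 2) * X) := by
    calc p * B.card ≤ p * _ :=
          Nat.mul_le_mul_left p ((Finset.card_le_card hsub).trans Finset.card_biUnion_le)
      _ = _ := Finset.mul_sum _ _ _
      _ ≤ ∑ w : Fin m → Fin d × Bool with wordProd w ≠ 1, (m + 4 * d ^ 2) * X := by
          refine Finset.sum_le_sum fun w hw => ?_
          convert word_count hdp w (Finset.mem_filter.1 hw).2
      _ = (Finset.univ.filter fun w : Fin m → Fin d × Bool => wordProd w ≠ 1).card *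
          ((m + 4 * d ^ 2) * X) := by simp
      _ ≤ _ := by
          apply Nat.mul_le_mul_right
          refine (Finset.card_le_univ _).trans ?_
          simp [Fintype.card_prod, mul_comm]
  have hcount' : (p : ℝ) * B.card ≤ (2 * d : ℝ) ^ m * ((m + 4 * (d : ℝ) ^ 2) * X) := by
    exact_mod_cast hcount
  have h6 : q ^ 4 * B.card ≤ q ^ 2 * ((1 + 4 * (d : ℝ) ^ 2) * X) := by
    rw [hq4]
    refine hcount'.trans ?_
    calc _ ≤ q * ((q + q * (4 * (d : ℝ) ^ 2)) * X) := by
          apply mul_le_mul hdm _ (by positivity) hq0.le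
          apply mul_le_mul_of_nonneg_right _ hXpos.le
          have : 4 * (d : ℝ) ^ 2 ≤ q * (4 * (d : ℝ) ^ 2) :=
            le_mul_of_one_le_left (by positivity) hq1
          linarith
      _ = _ := by ring
  have h7 : q ^ 2 * B.card ≤ (1 + 4 * (d : ℝ) ^ 2) * X := by
    have : q ^ 2 * (q ^ 2 * B.card) ≤ q ^ 2 * ((1 + 4 * (d : ℝ) ^ 2) * X) := by
      linarith [h6, show q ^ 2 * (q ^ 2 * (B.card : ℝ)) = q ^ 4 * B.card by ring]
    exact le_of_mul_le_mul_left this (by positivity)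
  have h8 : q * B.card ≤ (32 + 1 + 4 * (d : ℝ) ^ 2) * X := by
    have e1 : q * B.card ≤ q ^ 2 * B.card :=
      mul_le_mul_of_nonneg_right (le_self_pow₀ hq1 (by norm_num)) (Nat.cast_nonneg _)
    nlinarith
  rw [mul_right_comm, ← div_eq_mul_inv, le_div_iff₀ hq0, mul_comm]
  exact h8
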